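/- arXiv:0711.1006 — 4 statements merged into one kernel-verified Lean document; each statement's English description precedes it below -/
import Mathlib

section
/- The real line equipped with the half-open (lower limit) topology, i.e., the topology generated by the half-open intervals [a,b), is a Baire space. -/
/-- The half-open (lower limit) topology on `ℝ`, generated by the intervals `[a, b)`. -/
def halfOpenTopology : TopologicalSpace ℝ :=
  TopologicalSpace.generateFrom {I : Set ℝ | ∃ a b : ℝ, I = Set.Ico a b}

open Topology in
theorem halfOpen_exists_Ico {U : Set ℝ} (hU : IsOpen[halfOpenTopology] U) :
    ∀ x ∈ U, ∃ c, x < c ∧ Set.Ico x c ⊆ U := by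
  have hU' : TopologicalSpace.GenerateOpen {I : Set ℝ | ∃ a b : ℝ, I = Set.Ico a b} U := hU
  induction hU' with
  | basic s hs =>
    obtain ⟨a, b, rfl⟩ := hs
    intro x hx
    exact ⟨b, hx.2, Set.Ico_subset_Ico_left hx.1⟩
  | univ => exact fun x _ => ⟨x + 1, by linarith, Set.subset_univ _⟩
  | inter s t hs ht ihs iht =>
    intro x hx
    obtain ⟨c, hc, hcs⟩ := ihs hs x hx.1
    obtain ⟨d, hd, hdt⟩ := iht ht x hx.2
    exact ⟨min c d, lt_min hc hd, fun y hy =>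
      ⟨hcs ⟨hy.1, hy.2.trans_le (min_le_left _ _)⟩,
        hdt ⟨hy.1, hy.2.trans_le (min_le_right _ _)⟩⟩⟩
  | sUnion S hS ih =>
    rintro x ⟨s, hs, hx⟩
    obtain ⟨c, hc, hcs⟩ := ih s hs (hS s hs) x hx
    exact ⟨c, hc, hcs.trans (Set.subset_sUnion_of_mem hs)⟩

open Topology in
theorem halfOpen_isOpen_Ico (a b : ℝ) : IsOpen[halfOpenTopology] (Set.Ico a b) :=
  TopologicalSpace.GenerateOpen.basic _ ⟨a, b, rfl⟩

open Topology in
theorem halfOpen_dense_interior {U : Set ℝ} (hU : IsOpen[halfOpenTopology] U)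
    (hd : @Dense ℝ halfOpenTopology U) : Dense (interior U) := by
  rw [dense_iff_inter_open]
  rintro W hW ⟨p, hp⟩
  obtain ⟨b, hb, hbW⟩ := exists_Ico_subset_of_mem_nhds (hW.mem_nhds hp) ⟨p + 1, by linarith⟩
  obtain ⟨x, hx, hxU⟩ := (@dense_iff_inter_open ℝ halfOpenTopology U).1 hd _
    (halfOpen_isOpen_Ico p b) ⟨p, le_rfl, hb⟩
  obtain ⟨c, hc, hcU⟩ := halfOpen_exists_Ico hU x hxU
  obtain ⟨y, hy, hy'⟩ := exists_between (lt_min hc hx.2)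
  refine ⟨y, hbW ⟨hx.1.trans hy.le, hy'.trans_le (min_le_right _ _)⟩, ?_⟩
  exact interior_maximal (Set.Ioo_subset_Ico_self.trans hcU) isOpen_Ioo
    ⟨hy, hy'.trans_le (min_le_left _ _)⟩

/-- **The Sorgenfrey line is a Baire space.** The real line with the half-open
(lower limit) topology is a Baire space. -/
theorem halfOpenTopology_baireSpace : @BaireSpace ℝ halfOpenTopology := by
  refine @BaireSpace.mk ℝ halfOpenTopology ?_
  intro f ho hd
  have h : Dense (⋂ n, interior (f n)) :=
    dense_iInter_of_isOpen_nat (fun n => isOpen_interior)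
      (fun n => halfOpen_dense_interior (ho n) (hd n))
  refine (@dense_iff_inter_open ℝ halfOpenTopology _).2 ?_
  rintro W hW ⟨x, hx⟩
  obtain ⟨c, hc, hcW⟩ := halfOpen_exists_Ico hW x hx
  obtain ⟨y, hy, hyf⟩ := dense_iff_inter_open.1 h _ isOpen_Ioo (Set.nonempty_Ioo.2 hc)
  exact ⟨y, hcW (Set.Ioo_subset_Ico_self hy),
    Set.mem_iInter.2 fun n => interior_subset (Set.mem_iInter.1 hyf n)⟩
end

section
/- A subset of ℝ is meagre with respect to the half-open (lower limit) topology if and only if it is meagre with respect to the standard topology of ℝ. In particular, a subset of ℝ is comeagre (residual) in the half-open topology if and only if it is comeagre in the standard topology. -/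
theorem residual_le_aux {X : Type*} (t₁ t₂ : TopologicalSpace X) (hle : t₂ ≤ t₁)
    (h : ∀ V : Set X, @IsOpen _ t₂ V → V.Nonempty → ∃ W ⊆ V, @IsOpen _ t₁ W ∧ W.Nonempty)
    (A : Set X) : A ∈ @residual X t₂ ↔ A ∈ @residual X t₁ := by
  rw [@mem_residual_iff X t₂, @mem_residual_iff X t₁]
  constructor
  · rintro ⟨S, hSo, hSd, hSc, hS⟩
    refine ⟨(fun U => @interior X t₁ U) '' S, ?_, ?_, hSc.image _, ?_⟩
    · rintro _ ⟨U, _, rfl⟩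
      exact @isOpen_interior X t₁ U
    · rintro _ ⟨U, hU, rfl⟩
      rw [@dense_iff_inter_open X t₁]
      intro V hV hne
      have h1 := (@dense_iff_inter_open X t₂ U).1 (hSd U hU) V (hle V hV) hne
      obtain ⟨W, hWs, hWo, x, hx⟩ :=
        h (V ∩ U) (@IsOpen.inter X t₂ _ _ (hle V hV) (hSo U hU)) h1
      exact ⟨x, (hWs hx).1,
        @interior_maximal X t₁ _ _ (fun y hy => (hWs hy).2) hWo x hx⟩
    · intro x hx
      refine hS (fun U hU => ?_)
      exact @interior_subset X t₁ U x (hx _ ⟨U, hU, rfl⟩)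
  · rintro ⟨S, hSo, hSd, hSc, hS⟩
    refine ⟨S, fun U hU => hle U (hSo U hU), fun U hU => ?_, hSc, hS⟩
    rw [@dense_iff_inter_open X t₂]
    intro V hV hne
    obtain ⟨W, hWs, hWo, hWn⟩ := h V hV hne
    obtain ⟨x, hx, hxU⟩ := (@dense_iff_inter_open X t₁ U).1 (hSd U hU) W hWo hWn
    exact ⟨x, hWs hx, hxU⟩

theorem halfOpenTopology_le_standard :
    halfOpenTopology ≤ (inferInstance : TopologicalSpace ℝ) := by
  have hI : ∀ a b : ℝ, @IsOpen _ halfOpenTopology (Set.Ico a b) := fun a b =>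
    TopologicalSpace.isOpen_generateFrom_of_mem ⟨a, b, rfl⟩
  rw [OrderTopology.topology_eq_generate_intervals (α := ℝ)]
  refine le_generateFrom ?_
  rintro _ ⟨a, rfl | rfl⟩
  · have : Set.Ioi a = ⋃ x : Set.Ioi a, Set.Ico (x : ℝ) (x + 1) := by
      ext y
      simp only [Set.mem_Ioi, Set.mem_iUnion, Set.mem_Ico]
      exact ⟨fun hy => ⟨⟨y, hy⟩, le_refl y, by simp⟩, fun ⟨x, hx, _⟩ => lt_of_lt_of_le x.2 hx⟩
    rw [this]
    exact @isOpen_iUnion _ _ halfOpenTopology _ (fun x => hI _ _)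
  · have : Set.Iio a = ⋃ x : Set.Iio a, Set.Ico (x : ℝ) a := by
      ext y
      simp only [Set.mem_Iio, Set.mem_iUnion, Set.mem_Ico]
      exact ⟨fun hy => ⟨⟨y, hy⟩, le_refl y, hy⟩, fun ⟨_, _, hx⟩ => hx⟩
    rw [this]
    exact @isOpen_iUnion _ _ halfOpenTopology _ (fun x => hI _ _)

theorem exists_Ico_subset_of_halfOpen (U : Set ℝ) (hU : @IsOpen _ halfOpenTopology U) :
    ∀ x ∈ U, ∃ b, x < b ∧ Set.Ico x b ⊆ U := by
  induction hU with
  | basic s hs =>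
    obtain ⟨a, b, rfl⟩ := hs
    exact fun x hx => ⟨b, hx.2, Set.Ico_subset_Ico_left hx.1⟩
  | univ => exact fun x _ => ⟨x + 1, by simp, Set.subset_univ _⟩
  | inter s t _ _ hs ht =>
    intro x hx
    obtain ⟨b, hb, hbs⟩ := hs x hx.1
    obtain ⟨c, hc, hct⟩ := ht x hx.2
    exact ⟨min b c, lt_min hb hc, fun y hy =>
      ⟨hbs ⟨hy.1, lt_of_lt_of_le hy.2 (min_le_left _ _)⟩,
       hct ⟨hy.1, lt_of_lt_of_le hy.2 (min_le_right _ _)⟩⟩⟩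
  | sUnion S _ ih =>
    rintro x ⟨s, hs, hx⟩
    obtain ⟨b, hb, hbs⟩ := ih s hs x hx
    exact ⟨b, hb, hbs.trans (Set.subset_sUnion_of_mem hs)⟩

theorem mem_residual_halfOpen_iff (A : Set ℝ) :
    A ∈ @residual ℝ halfOpenTopology ↔ A ∈ residual ℝ := by
  refine residual_le_aux _ _ halfOpenTopology_le_standard ?_ A
  rintro V hV ⟨x, hx⟩
  obtain ⟨b, hb, hbV⟩ := exists_Ico_subset_of_halfOpen V hV x hx
  exact ⟨Set.Ioo x b, Set.Ioo_subset_Ico_self.trans hbV, isOpen_Ioo, Set.nonempty_Ioo.2 hb⟩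

/-- A subset of `ℝ` is meagre for the half-open (lower limit) topology if and only if it
is meagre for the standard topology; consequently a subset is comeagre (residual) for the
half-open topology if and only if it is comeagre for the standard topology. -/
theorem isMeagre_halfOpenTopology_iff_isMeagre :
    (∀ A : Set ℝ, @IsMeagre ℝ halfOpenTopology A ↔ IsMeagre A) ∧
    (∀ A : Set ℝ, A ∈ @residual ℝ halfOpenTopology ↔ A ∈ residual ℝ) := by
  exact ⟨fun A => mem_residual_halfOpen_iff Aᶜ, mem_residual_halfOpen_iff⟩
end

section
/- Let E ⊆ ℝ≥0 be closed under addition (s, t ∈ E implies s + t ∈ E) and suppose E is comeagre in ℝ≥0 with its standard topology (i.e., the complement of E in ℝ≥0 is meagre). Then E contains every positive real number. -/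
/-- **A comeagre sub-semigroup of `ℝ≥0` contains all positive reals.** If `E ⊆ [0,∞)` is
closed under addition and its complement in `[0,∞)` is meagre (for the standard topology),
then `E` contains every positive real number. -/
theorem comeagre_subsemigroup_eq_pos (E : Set ℝ) (hE0 : E ⊆ Set.Ici 0)
    (hadd : ∀ s ∈ E, ∀ t ∈ E, s + t ∈ E)
    (hmeagre : IsMeagre (Set.Ici 0 \ E)) :
    ∀ r : ℝ, 0 < r → r ∈ E := by
  intro r hr
  by_contra hrE
  have h2 : IsMeagre ((Homeomorph.subLeft r) ⁻¹' (Set.Ici 0 \ E)) :=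
    hmeagre.preimage_of_isOpenMap (Homeomorph.subLeft r).continuous
      (Homeomorph.subLeft r).isOpenMap
  refine not_isMeagre_of_isOpen (isOpen_Ioo (a := (0 : ℝ)) (b := r))
    (Set.nonempty_Ioo.2 hr) ((hmeagre.union h2).mono ?_)
  rintro x ⟨hx0, hxr⟩
  by_cases hx : x ∈ E
  · right
    refine ⟨?_, fun hy => hrE ?_⟩
    · simp [hxr.le]
    · have h := hadd x hx _ hy
      simpa using h
  · exact Or.inl ⟨hx0.le, hx⟩
end

section
/- Let r be an irrational real number. Then the function x ↦ e^{irx}, as an element of L^∞(ℝ; ℂ), does not belong to the closed linear span (in the L^∞ norm) of the set of functions {x ↦ e^{iqx} : q ∈ ℚ}. -/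
open MeasureTheory Complex

lemma aux_ii (r : ℝ) (G : Lp ℂ ⊤ (volume : Measure ℝ)) (a b : ℝ) :
    IntervalIntegrable (fun x : ℝ => G x * Complex.exp (-(Complex.I * r * x))) volume a b := by
  have h : IntervalIntegrable (G : ℝ → ℂ) volume a b := by
    rw [intervalIntegrable_iff]
    have h1 : MemLp (G : ℝ → ℂ) ⊤ (volume.restrict (Set.uIoc a b)) := (Lp.memLp G).restrict _
    haveI : IsFiniteMeasure (volume.restrict (Set.uIoc a b)) :=
      ⟨by simp [Set.uIoc]⟩
    exact h1.integrable le_top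
  exact h.mul_continuousOn (by fun_prop)

lemma aux_norm (r x : ℝ) : ‖Complex.exp (-(Complex.I * r * x))‖ = 1 := by
  have : -(Complex.I * r * x) = ((-(r * x) : ℝ) : ℂ) * Complex.I := by push_cast; ring
  rw [this, Complex.norm_exp_ofReal_mul_I]

lemma aux_bound (r : ℝ) (G : Lp ℂ ⊤ (volume : Measure ℝ)) (n : ℕ) :
    ‖∫ x in (0:ℝ)..n, G x * Complex.exp (-(Complex.I * r * x))‖ ≤ ‖G‖ * n := by
  have h : ∀ᵐ x ∂(volume : Measure ℝ), ‖G x‖ ≤ ‖G‖ := by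
    have h1 := ae_le_eLpNormEssSup (f := (G : ℝ → ℂ)) (μ := volume)
    filter_upwards [h1] with x hx
    rw [Lp.norm_def, eLpNorm_exponent_top]
    have h2 : eLpNormEssSup (G : ℝ → ℂ) volume ≠ ⊤ := by
      rw [← eLpNorm_exponent_top]; exact Lp.eLpNorm_ne_top G
    have := ENNReal.toReal_mono h2 hx
    simpa using this
  have := intervalIntegral.norm_integral_le_of_norm_le_const_ae (a := 0) (b := (n:ℝ)) (C := ‖G‖)
    (f := fun x : ℝ => G x * Complex.exp (-(Complex.I * r * x))) (by
      filter_upwards [h] with x hx _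
      rw [norm_mul, aux_norm, mul_one]; exact hx)
  simpa using this

lemma aux_tendsto (r : ℝ) (hr : Irrational r) (G : Lp ℂ ⊤ (volume : Measure ℝ))
    (hG : G ∈ Submodule.span ℂ
        {G : Lp ℂ ⊤ (volume : Measure ℝ) |
          ∃ q : ℚ, (G : ℝ → ℂ) =ᵐ[volume] fun x : ℝ => Complex.exp (Complex.I * q * x)}) :
    ∃ C : ℝ, ∀ n : ℕ, ‖∫ x in (0:ℝ)..n, G x * Complex.exp (-(Complex.I * r * x))‖ ≤ C := by
  induction hG using Submodule.span_induction with
  | mem G h =>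
    obtain ⟨q, hq⟩ := h
    have hc : Complex.I * ((q : ℂ) - r) ≠ 0 := by
      refine mul_ne_zero Complex.I_ne_zero ?_
      rw [sub_ne_zero]
      intro h
      exact hr ⟨q, by exact_mod_cast h⟩
    refine ⟨2 / ‖Complex.I * ((q : ℂ) - r)‖, fun n => ?_⟩
    have e : ∫ x in (0:ℝ)..n, G x * Complex.exp (-(Complex.I * r * x))
        = ∫ x in (0:ℝ)..n, Complex.exp (Complex.I * ((q : ℂ) - r) * x) := by
      apply intervalIntegral.integral_congr_ae
      filter_upwards [hq] with x hx _
      rw [hx, ← Complex.exp_add]; congr 1; ring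
    rw [e, integral_exp_mul_complex hc, norm_div]
    gcongr
    refine (norm_sub_le _ _).trans ?_
    have (y : ℝ) : ‖Complex.exp (Complex.I * ((q : ℂ) - r) * y)‖ = 1 := by
      have := aux_norm (r - q) y
      rw [← this]; congr 2; push_cast; ring
    rw [this, this]; norm_num
  | zero =>
    refine ⟨0, fun n => ?_⟩
    simpa using aux_bound r 0 n
  | add G H _ _ h1 h2 =>
    obtain ⟨C, hC⟩ := h1
    obtain ⟨D, hD⟩ := h2
    refine ⟨C + D, fun n => ?_⟩
    have e : ∫ x in (0:ℝ)..n, (G + H : Lp ℂ ⊤ (volume : Measure ℝ)) x * Complex.exp (-(Complex.I * r * x))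
        = ∫ x in (0:ℝ)..n, (G x * Complex.exp (-(Complex.I * r * x)) +
            H x * Complex.exp (-(Complex.I * r * x))) := by
      apply intervalIntegral.integral_congr_ae
      filter_upwards [Lp.coeFn_add G H] with x hx _
      rw [hx, Pi.add_apply, add_mul]
    rw [e, intervalIntegral.integral_add (aux_ii r G _ _) (aux_ii r H _ _)]
    exact (norm_add_le _ _).trans (add_le_add (hC n) (hD n))
  | smul c G _ h =>
    obtain ⟨C, hC⟩ := h
    refine ⟨‖c‖ * C, fun n => ?_⟩
    have e : ∫ x in (0:ℝ)..n, (c • G : Lp ℂ ⊤ (volume : Measure ℝ)) x * Complex.exp (-(Complex.I * r * x))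
        = ∫ x in (0:ℝ)..n, c * (G x * Complex.exp (-(Complex.I * r * x))) := by
      apply intervalIntegral.integral_congr_ae
      filter_upwards [Lp.coeFn_smul c G] with x hx _
      rw [hx, Pi.smul_apply, smul_eq_mul, mul_assoc]
    rw [e, intervalIntegral.integral_const_mul, norm_mul]
    exact mul_le_mul_of_nonneg_left (hC n) (norm_nonneg _)

/-- **`e^{irx}` is not in the closed span of `{e^{iqx} : q ∈ ℚ}` in `L^∞(ℝ)`.**
For irrational `r`, the element of `L^∞(ℝ; ℂ)` represented by `x ↦ e^{irx}` does not
belong to the closed linear span of the elements represented by `x ↦ e^{iqx}`, `q ∈ ℚ`. -/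
theorem exp_irrational_not_mem_closure_span_exp_rat (r : ℝ) (hr : Irrational r) :
    ∀ F : Lp ℂ ⊤ (volume : Measure ℝ),
      (F : ℝ → ℂ) =ᵐ[volume] (fun x : ℝ => Complex.exp (Complex.I * r * x)) →
      F ∉ closure (Submodule.span ℂ
        {G : Lp ℂ ⊤ (volume : Measure ℝ) |
          ∃ q : ℚ, (G : ℝ → ℂ) =ᵐ[volume] fun x : ℝ => Complex.exp (Complex.I * q * x)}
        : Set (Lp ℂ ⊤ (volume : Measure ℝ))) := by
  intro F hF hmem
  obtain ⟨G, hG, hd⟩ := Metric.mem_closure_iff.1 hmem (1 / 2) (by norm_num)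
  obtain ⟨C, hC⟩ := aux_tendsto r hr G hG
  rw [dist_eq_norm] at hd
  obtain ⟨n, hn⟩ := exists_nat_gt (2 * C)
  have e : ∫ x in (0:ℝ)..n, (F - G : Lp ℂ ⊤ (volume : Measure ℝ)) x * Complex.exp (-(Complex.I * r * x))
      = ∫ x in (0:ℝ)..n, ((1 : ℂ) - G x * Complex.exp (-(Complex.I * r * x))) := by
    apply intervalIntegral.integral_congr_ae
    filter_upwards [Lp.coeFn_sub F G, hF] with x hx hx2 _
    rw [hx, Pi.sub_apply, hx2, sub_mul, ← Complex.exp_add, add_neg_cancel, Complex.exp_zero]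
  have hb := aux_bound r (F - G) n
  rw [e, intervalIntegral.integral_sub (by simp) (aux_ii r G _ _)] at hb
  have h1 : ‖∫ x in (0:ℝ)..n, (1 : ℂ)‖ = n := by simp
  have h2 := norm_sub_norm_le (∫ x in (0:ℝ)..n, (1 : ℂ))
    (∫ x in (0:ℝ)..n, G x * Complex.exp (-(Complex.I * r * x)))
  have h3 := hC n
  have h4 : ‖F - G‖ * n ≤ 1 / 2 * n := by gcongr
  linarith
end
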